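/- Fix a tetrahedron with vertices a, b, c, d whose edges ab, bc, cd are all obtuse, and fix one of the four falling patterns along the face chain C–D–A–B (an assignment of a unique stable sink face S together with, for each other face, the tipping direction along the chain toward S). Then the loading zone of this pattern — the set of interior points p such that the tetrahedron with load p is stable on S and on no other face, and every other face tips over the appropriate shared edge toward S along the chain — is the interior of a tetrahedron, i.e. it equals the interior of the convex hull of some four affinely independent points. -/

import Mathlib

open RealInnerProductSpace

noncomputable section

abbrev E3 : Type := EuclideanSpace ℝ (Fin 3)

/-- The tetrahedron with load point `p` is *stable* on the face with vertices
`v₁, v₂, v₃`: the orthogonal projection of `p` onto the affine span of the face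
lies in the relative (intrinsic) interior of the face. -/
def StableOn (p v₁ v₂ v₃ : E3) : Prop :=
  ∃ q ∈ intrinsicInterior ℝ (convexHull ℝ ({v₁, v₂, v₃} : Set E3)),
    ∀ w ∈ (affineSpan ℝ ({v₁, v₂, v₃} : Set E3)).direction, ⟪p - q, w⟫ = 0

/-- Placed on the face with vertices `apex, e₁, e₂` and load point `p`, the
tetrahedron *tips over* the edge `e₁e₂` onto the adjacent face: the orthogonal
projection `q` of `p` onto the plane of the face lies strictly on the opposite
side of the line through `e₁, e₂` from the remaining vertex `apex`. -/
def TipsOver (p apex e₁ e₂ : E3) : Prop :=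
  ∃ q ∈ affineSpan ℝ ({apex, e₁, e₂} : Set E3),
    (∀ w ∈ (affineSpan ℝ ({apex, e₁, e₂} : Set E3)).direction, ⟪p - q, w⟫ = 0) ∧
    (affineSpan ℝ ({e₁, e₂} : Set E3)).SOppSide q apex

/-- The edge `PQ` of the tetrahedron `PQRS` is *obtuse*: writing `R'`, `S'` for
the components of `R - P`, `S - P` orthogonal to `Q - P`, we have `⟪R', S'⟫ < 0`. -/
def ObtuseEdge (P Q R S : E3) : Prop :=
  ⟪(R - P) - (⟪R - P, Q - P⟫ / ⟪Q - P, Q - P⟫) • (Q - P),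
   (S - P) - (⟪S - P, Q - P⟫ / ⟪Q - P, Q - P⟫) • (Q - P)⟫ < 0

/-- Stability on the `i`-th face of tetrahedron `ABCD` (the face opposite the
`i`-th vertex). -/
def FaceStable (A B C D p : E3) : Fin 4 → Prop
  | 0 => StableOn p B C D
  | 1 => StableOn p A C D
  | 2 => StableOn p A B D
  | 3 => StableOn p A B C

/-- The four falling patterns along the face chain `C–D–A–B` of the tetrahedron
`abcd`, where `A = bcd`, `B = acd`, `C = abd`, `D = abc` are the faces opposite
`a, b, c, d` (so `C, D` share edge `ab`, `D, A` share `bc`, and `A, B` share `cd`).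
The pattern with index `k` has the `k`-th face of the chain `C, D, A, B` as its
unique stable (sink) face, and every other face tips over the shared edge onto
the next face along the chain in the direction of the sink:
`0 ↦ C←D←A←B`, `1 ↦ C→D←A←B`, `2 ↦ C→D→A←B`, `3 ↦ C→D→A→B`. -/
def FallingPattern (a b c d p : E3) : Fin 4 → Prop
  | 0 => -- sink C : C←D←A←B
      StableOn p a b d ∧ ¬ StableOn p a b c ∧ ¬ StableOn p b c d ∧ ¬ StableOn p a c d ∧
      TipsOver p c a b ∧ TipsOver p d b c ∧ TipsOver p a c d
  | 1 => -- sink D : C→D←A←B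
      StableOn p a b c ∧ ¬ StableOn p a b d ∧ ¬ StableOn p b c d ∧ ¬ StableOn p a c d ∧
      TipsOver p d a b ∧ TipsOver p d b c ∧ TipsOver p a c d
  | 2 => -- sink A : C→D→A←B
      StableOn p b c d ∧ ¬ StableOn p a b d ∧ ¬ StableOn p a b c ∧ ¬ StableOn p a c d ∧
      TipsOver p d a b ∧ TipsOver p a b c ∧ TipsOver p a c d
  | 3 => -- sink B : C→D→A→B
      StableOn p a c d ∧ ¬ StableOn p a b d ∧ ¬ StableOn p a b c ∧ ¬ StableOn p b c d ∧
      TipsOver p d a b ∧ TipsOver p a b c ∧ TipsOver p b c d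

/-!
Let `x i` be the barycentric coordinates of the load point and `G` the Gram matrix of their
gradients; an edge is obtuse exactly when the entry `G i j` of its two faces is positive. The
projection onto face `i` has coordinates `x j - (G i j / G i i) * x i`, so face `i` tips onto face
`j` iff `G i i * x j < G i j * x i`. If `ab`, `bc`, `cd` are obtuse, the vanishing row sums and
positivity of `G` force the other three edges to be acute. Now suppose every face other than the
sink `k` tips onto its successor and `0 < x k`. Walking back along the chain from `k`, all
coordinates are positive, and Cauchy–Schwarz makes the sink stable. Hence the loading zone is cut
out by four linear inequalities `0 < (M x) i` where `M⁻¹` has nonnegative entries: it is the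
interior of the tetrahedron whose vertices are the columns of `M⁻¹`, normalised to have sum one.
-/

section BarycentricCoordinates

variable {ι k V P : Type*} [AddCommGroup V] [AddTorsor V P]

lemma mem_affineSpan_image_iff_coord_eq_zero [Finite ι] [Ring k] [Nontrivial k] [Module k V]
    (b : AffineBasis ι k P) {s : Set ι} {q : P} :
    q ∈ affineSpan k (b '' s) ↔ ∀ i ∉ s, b.coord i q = 0 := by
  cases nonempty_fintype ι
  constructor
  · intro hq i hi
    rw [← b.affineCombination_coord_eq_self q] at hq
    exact b.ind.eq_zero_of_affineCombination_mem_affineSpan (b.sum_coord_apply_eq_one q) hq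
      (Finset.mem_univ i) hi
  · intro hq
    rw [← b.affineCombination_coord_eq_self q]
    exact affineCombination_mem_affineSpan_image (b.sum_coord_apply_eq_one q)
      (fun i _ hi ↦ hq i hi) b

lemma sOppSide_affineSpan_image_iff_coord_neg [Finite ι] [Field k] [LinearOrder k]
    [IsStrictOrderedRing k] [Module k V] (b : AffineBasis ι k P) {s : Set ι} {j : ι}
    (hj : j ∉ s) {q : P} (hq : q ∈ affineSpan k (b '' insert j s)) :
    (affineSpan k (b '' s)).SOppSide q (b j) ↔ b.coord j q < 0 := by
  constructor
  · intro h
    obtain ⟨y, hy, ⟨r, hr01, rfl⟩, hyq, hyj⟩ := h.exists_sbtw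
    have hr : r ∈ Set.Ioo (0 : k) 1 := (sbtw_lineMap_iff.1 ⟨⟨r, hr01, rfl⟩, hyq, hyj⟩).2
    have hy0 := (mem_affineSpan_image_iff_coord_eq_zero b).1 hy j hj
    rw [AffineMap.apply_lineMap, b.coord_apply_eq, AffineMap.lineMap_apply_module] at hy0
    simp only [smul_eq_mul, mul_one] at hy0
    nlinarith [hr.1, hr.2]
  · intro hneg
    set t := b.coord j q with ht
    have hqs : q ∉ affineSpan k (b '' s) := fun h ↦
      hneg.ne ((mem_affineSpan_image_iff_coord_eq_zero b).1 h j hj)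
    have hqj : q ≠ b j := by
      rintro rfl
      rw [ht, b.coord_apply_eq] at hneg
      exact absurd hneg (by simp)
    have hcross : AffineMap.lineMap q (b j) (t / (t - 1)) ∈ affineSpan k (b '' s) := by
      refine (mem_affineSpan_image_iff_coord_eq_zero b).2 fun i hi ↦ ?_
      rw [AffineMap.apply_lineMap, AffineMap.lineMap_apply_module]
      obtain rfl | hij := eq_or_ne i j
      · have : t - 1 ≠ 0 := by linarith
        rw [b.coord_apply_eq, ← ht]
        simp only [smul_eq_mul]
        field_simp
        ring
      · rw [b.coord_apply_ne hij,
          (mem_affineSpan_image_iff_coord_eq_zero b).1 hq i (by simp [hij, hi])]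
        simp
    refine (sbtw_lineMap_iff.2 ⟨hqj, ?_, ?_⟩).sOppSide_of_notMem_of_mem hqs hcross
    · exact div_pos_of_neg_of_neg hneg (by linarith)
    · rw [div_lt_one_of_neg (by linarith)]
      linarith

lemma exists_affineBasis_toMatrix_eq [Fintype ι] [DecidableEq ι] [CommRing k] [Nontrivial k]
    [Module k V] (b : AffineBasis ι k P) {A : Matrix ι ι k} (hA : IsUnit A)
    (hsum : ∀ i, ∑ j, A i j = 1) :
    ∃ b' : AffineBasis ι k P, b.toMatrix b' = A := by
  let v (i : ι) : P := Finset.univ.affineCombination k b (A i)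
  have hv : b.toMatrix v = A := by
    ext i j
    exact b.coord_apply_combination_of_mem (Finset.mem_univ j) (hsum i)
  obtain ⟨hind, htop⟩ := (b.isUnit_toMatrix_iff v).1 (hv ▸ hA)
  exact ⟨⟨v, hind, htop⟩, hv⟩

end BarycentricCoordinates

section ConvexHull

open scoped Topology

variable {ι V : Type*} [Finite ι] [NormedAddCommGroup V] [NormedSpace ℝ V]

lemma mem_convexHull_image_iff_coord (b : AffineBasis ι ℝ V) {s : Set ι} {q : V} :
    q ∈ convexHull ℝ (b '' s) ↔ (∀ i, 0 ≤ b.coord i q) ∧ ∀ i ∉ s, b.coord i q = 0 := by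
  classical
  cases nonempty_fintype ι
  constructor
  · intro hq
    refine ⟨?_, (mem_affineSpan_image_iff_coord_eq_zero b).1 (convexHull_subset_affineSpan _ hq)⟩
    have hrange := convexHull_mono (Set.image_subset_range b s) hq
    rwa [b.convexHull_eq_nonneg_coord] at hrange
  · rintro ⟨hnonneg, hzero⟩
    have hsupp : ∀ i ∈ (Finset.univ : Finset ι), i ∉ Finset.univ.filter (· ∈ s) →
        b.coord i q = 0 := fun i _ hi ↦ hzero i (by simpa using hi)
    rw [← b.linear_combination_coord_eq_self q,
      ← Finset.sum_subset (Finset.filter_subset _ _) fun i hi hi' ↦ by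
        rw [hsupp i hi hi', zero_smul]]
    refine (convex_convexHull ℝ _).sum_mem (fun i _ ↦ hnonneg i) ?_ fun i hi ↦
      subset_convexHull ℝ _ ⟨i, by simpa using hi, rfl⟩
    rw [Finset.sum_subset (Finset.filter_subset _ _) hsupp, b.sum_coord_apply_eq_one]

lemma mem_intrinsicInterior_convexHull_image_iff_coord (b : AffineBasis ι ℝ V) {s : Set ι}
    {q : V} : q ∈ intrinsicInterior ℝ (convexHull ℝ (b '' s)) ↔
      (∀ i ∈ s, 0 < b.coord i q) ∧ ∀ i ∉ s, b.coord i q = 0 := by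
  have : FiniteDimensional ℝ V := b.finiteDimensional
  rw [mem_intrinsicInterior]
  constructor
  · rintro ⟨y, hy, rfl⟩
    have hyhull : y ∈ Subtype.val ⁻¹' convexHull ℝ (b '' s) := interior_subset hy
    obtain ⟨hnonneg, hzero⟩ := (mem_convexHull_image_iff_coord b).1 hyhull
    refine ⟨fun m hm ↦ (hnonneg m).lt_of_ne' fun hym ↦ ?_, hzero⟩
    have hbm : b m ∈ affineSpan ℝ (convexHull ℝ (b '' s)) :=
      subset_affineSpan ℝ _ (subset_convexHull ℝ _ ⟨m, hm, rfl⟩)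
    let ray (t : ℝ) : affineSpan ℝ (convexHull ℝ (b '' s)) :=
      ⟨AffineMap.lineMap (b m) y t, AffineMap.lineMap_mem t hbm y.2⟩
    have hray : Continuous ray := AffineMap.lineMap_continuous.subtype_mk _
    have hnear : ∀ᶠ t in 𝓝 (1 : ℝ), (ray t : V) ∈ convexHull ℝ (b '' s) := by
      have hray1 : ray 1 = y := Subtype.ext (AffineMap.lineMap_apply_one _ _)
      exact hray.continuousAt (hray1 ▸ mem_interior_iff_mem_nhds.1 hy)
    obtain ⟨t, hmem, ht⟩ :=
      ((hnear.filter_mono nhdsWithin_le_nhds).and (self_mem_nhdsWithin (s := Set.Ioi 1))).exists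
    have hcoord := ((mem_convexHull_image_iff_coord b).1 hmem).1 m
    rw [AffineMap.apply_lineMap, b.coord_apply_eq, hym, AffineMap.lineMap_apply_module] at hcoord
    simp only [smul_eq_mul, mul_one, mul_zero, add_zero, sub_nonneg] at hcoord
    exact hcoord.not_gt ht
  · rintro ⟨hpos, hzero⟩
    have hq := (mem_affineSpan_image_iff_coord_eq_zero b).2 hzero
    rw [← affineSpan_convexHull] at hq
    refine ⟨⟨q, hq⟩, mem_interior.2 ⟨{y | ∀ i ∈ s, 0 < b.coord i y}, ?_, ?_, hpos⟩, rfl⟩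
    · rintro ⟨y, hy⟩ hypos
      rw [affineSpan_convexHull, mem_affineSpan_image_iff_coord_eq_zero] at hy
      refine (mem_convexHull_image_iff_coord b).2 ⟨fun i ↦ ?_, hy⟩
      by_cases hi : i ∈ s
      exacts [(hypos i hi).le, (hy i hi).ge]
    · simp only [Set.ofPred_forall]
      exact s.toFinite.isOpen_biInter fun i _ ↦ isOpen_lt continuous_const
        ((continuous_barycentric_coord b i).comp continuous_subtype_val)

end ConvexHull

section Gradient

variable {ι V : Type*} [NormedAddCommGroup V] [InnerProductSpace ℝ V] [FiniteDimensional ℝ V]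

/-- The gradient of the `i`-th barycentric coordinate, i.e. the inner normal of the facet opposite
`b i`, scaled by the reciprocal of the height over that facet. -/
def coordGrad (b : AffineBasis ι ℝ V) (i : ι) : V :=
  (InnerProductSpace.toDual ℝ V).symm (LinearMap.toContinuousLinearMap (b.coord i).linear)

/-- The Gram matrix of the gradients of the barycentric coordinates. The dihedral angle between the
facets `i ≠ j` has cosine `-G i j / √(G i i * G j j)`, so it is obtuse when `G i j` is positive. -/
def coordGram (b : AffineBasis ι ℝ V) : Matrix ι ι ℝ :=
  Matrix.gram ℝ (coordGrad b)

lemma inner_coordGrad (b : AffineBasis ι ℝ V) (i : ι) (v : V) :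
    ⟪coordGrad b i, v⟫ = (b.coord i).linear v :=
  InnerProductSpace.toDual_symm_apply

lemma inner_coordGrad_sub (b : AffineBasis ι ℝ V) (i : ι) (p q : V) :
    ⟪coordGrad b i, p - q⟫ = b.coord i p - b.coord i q := by
  rw [inner_coordGrad]
  exact (b.coord i).linearMap_vsub p q

lemma coordGram_comm (b : AffineBasis ι ℝ V) (i j : ι) : coordGram b i j = coordGram b j i :=
  real_inner_comm _ _

lemma coordGram_mul_self_le (b : AffineBasis ι ℝ V) (i j : ι) :
    coordGram b i j * coordGram b i j ≤ coordGram b i i * coordGram b j j :=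
  real_inner_mul_inner_self_le _ _

lemma coordGram_self_pos [Nontrivial ι] (b : AffineBasis ι ℝ V) (i : ι) :
    0 < coordGram b i i := by
  refine real_inner_self_pos.2 fun hgrad ↦ ?_
  obtain ⟨j, hj⟩ := exists_ne i
  have h := inner_coordGrad_sub b i (b i) (b j)
  rw [hgrad, inner_zero_left, b.coord_apply_eq, b.coord_apply_ne hj.symm] at h
  norm_num at h

/-- Orthogonal projection onto the facet opposite `b i`. -/
def facetProj (b : AffineBasis ι ℝ V) (i : ι) (p : V) : V :=
  p - (b.coord i p / coordGram b i i) • coordGrad b i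

lemma coord_facetProj (b : AffineBasis ι ℝ V) (i j : ι) (p : V) :
    b.coord j (facetProj b i p) =
      b.coord j p - b.coord i p / coordGram b i i * coordGram b i j := by
  have h := inner_coordGrad_sub b j p (facetProj b i p)
  rw [facetProj, sub_sub_cancel, inner_smul_right, real_inner_comm, ← Matrix.gram_apply,
    ← coordGram] at h
  rw [facetProj]
  linarith

lemma sum_coordGrad [Fintype ι] (b : AffineBasis ι ℝ V) : ∑ i, coordGrad b i = 0 := by
  refine ext_inner_right ℝ fun v ↦ ?_
  have h (i : ι) : ⟪coordGrad b i, v⟫ = b.coord i v - b.coord i 0 := by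
    rw [← inner_coordGrad_sub, sub_zero]
  simp only [sum_inner, h, Finset.sum_sub_distrib, b.sum_coord_apply_eq_one, sub_self,
    inner_zero_left]

lemma sum_coordGram [Fintype ι] (b : AffineBasis ι ℝ V) (i : ι) : ∑ j, coordGram b i j = 0 := by
  simp only [coordGram, Matrix.gram_apply, ← inner_sum, sum_coordGrad, inner_zero_right]

lemma sum_inner_vertex_sub_smul_coordGrad [Fintype ι] (b : AffineBasis ι ℝ V) (k : ι)
    (v : V) :
    ∑ m, ⟪v, b m - b k⟫ • coordGrad b m = v := by
  classical
  refine InnerProductSpace.ext_inner_right_basis (b.basisOf k) fun n ↦ ?_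
  rw [b.basisOf_apply, vsub_eq_sub]
  simp only [sum_inner, real_inner_smul_left, inner_coordGrad_sub, b.coord_apply, mul_sub,
    mul_ite, mul_one, mul_zero, Finset.sum_sub_distrib, Finset.sum_ite_eq', Finset.mem_univ,
    if_true, sub_self, inner_zero_right, sub_zero]

variable [Finite ι]

lemma inner_coordGrad_of_mem_direction (b : AffineBasis ι ℝ V) {s : Set ι} {i : ι} (hi : i ∉ s)
    {w : V} (hw : w ∈ (affineSpan ℝ (b '' s)).direction) : ⟪coordGrad b i, w⟫ = 0 := by
  rcases (affineSpan ℝ (b '' s)).eq_bot_or_nonempty with hbot | hne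
  · rw [hbot, AffineSubspace.direction_bot, Submodule.mem_bot] at hw
    rw [hw, inner_zero_right]
  · obtain ⟨p, hp, q, hq, rfl⟩ := (AffineSubspace.mem_direction_iff_eq_vsub hne w).1 hw
    rw [mem_affineSpan_image_iff_coord_eq_zero] at hp hq
    rw [vsub_eq_sub, inner_coordGrad_sub, hp i hi, hq i hi, sub_zero]

lemma facetProj_mem_affineSpan [Nontrivial ι] (b : AffineBasis ι ℝ V) (i : ι) (p : V) :
    facetProj b i p ∈ affineSpan ℝ (b '' {i}ᶜ) := by
  refine (mem_affineSpan_image_iff_coord_eq_zero b).2 fun j hj ↦ ?_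
  obtain rfl : j = i := by simpa using hj
  rw [coord_facetProj, div_mul_cancel₀ _ (coordGram_self_pos b j).ne', sub_self]

lemma forall_inner_direction_eq_zero_iff_eq_facetProj [Nontrivial ι] (b : AffineBasis ι ℝ V)
    (i : ι) (p : V) {q : V} (hq : q ∈ affineSpan ℝ (b '' {i}ᶜ)) :
    (∀ w ∈ (affineSpan ℝ (b '' {i}ᶜ)).direction, ⟪p - q, w⟫ = 0) ↔ q = facetProj b i p := by
  have hproj : ∀ w ∈ (affineSpan ℝ (b '' {i}ᶜ)).direction, ⟪p - facetProj b i p, w⟫ = 0 := by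
    intro w hw
    rw [facetProj, sub_sub_cancel, real_inner_smul_left,
      inner_coordGrad_of_mem_direction b (by simp) hw, mul_zero]
  refine ⟨fun horth ↦ ?_, fun h ↦ h ▸ hproj⟩
  have hdir := AffineSubspace.vsub_mem_direction hq (facetProj_mem_affineSpan b i p)
  rw [vsub_eq_sub] at hdir
  rw [← sub_eq_zero, ← inner_self_eq_zero (𝕜 := ℝ)]
  have key := congrArg₂ (· - ·) (hproj _ hdir) (horth _ hdir)
  simpa only [← inner_sub_left, sub_sub_sub_cancel_left, sub_zero] using key

lemma eq_smul_coordGrad_add_smul_coordGrad (b : AffineBasis ι ℝ V) {i j k : ι} (hij : i ≠ j)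
    (hki : k ≠ i) (hkj : k ≠ j) {v : V} (hv : v ∈ (affineSpan ℝ (b '' {i, j}ᶜ)).directionᗮ) :
    v = ⟪v, b i - b k⟫ • coordGrad b i + ⟪v, b j - b k⟫ • coordGrad b j := by
  cases nonempty_fintype ι
  have hmem (m : ι) (hm : m ≠ i ∧ m ≠ j) : b m ∈ affineSpan ℝ (b '' {i, j}ᶜ) :=
    mem_affineSpan ℝ ⟨m, by simp [hm.1, hm.2], rfl⟩
  conv_lhs => rw [← sum_inner_vertex_sub_smul_coordGrad b k v]
  refine Fintype.sum_eq_add i j hij fun m hm ↦ ?_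
  have hdir := AffineSubspace.vsub_mem_direction (hmem m hm) (hmem k ⟨hki, hkj⟩)
  rw [← vsub_eq_sub (b m), Submodule.inner_left_of_mem_orthogonal hdir hv, zero_smul]

lemma inner_mul_coordGram_self_eq_neg (b : AffineBasis ι ℝ V) {i j k : ι} (hij : i ≠ j)
    (hki : k ≠ i) (hkj : k ≠ j) {R S : V}
    (hR : R ∈ (affineSpan ℝ (b '' {i, j}ᶜ)).directionᗮ)
    (hRi : b i - b k - R ∈ (affineSpan ℝ (b '' {i, j}ᶜ)).direction)
    (hSj : b j - b k - S ∈ (affineSpan ℝ (b '' {i, j}ᶜ)).direction) :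
    ⟪R, S⟫ * coordGram b j j = -(⟪R, R⟫ * coordGram b i j) := by
  have hRR : ⟪R, b i - b k⟫ = ⟪R, R⟫ := by
    rw [← sub_eq_zero, ← inner_sub_right, Submodule.inner_left_of_mem_orthogonal hRi hR]
  have hRS : ⟪R, b j - b k⟫ = ⟪R, S⟫ := by
    rw [← sub_eq_zero, ← inner_sub_right, Submodule.inner_left_of_mem_orthogonal hSj hR]
  have hjR : ⟪coordGrad b j, R⟫ = 0 := by
    have h := inner_coordGrad_of_mem_direction b (by simp) hRi (i := j)
    rwa [inner_sub_right, inner_coordGrad_sub, b.coord_apply_ne hij.symm,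
      b.coord_apply_ne hkj.symm, sub_zero, zero_sub, neg_eq_zero] at h
  have hexp := eq_smul_coordGrad_add_smul_coordGrad b hij hki hkj hR
  rw [hRR, hRS] at hexp
  rw [hexp, inner_add_right, inner_smul_right, inner_smul_right, ← Matrix.gram_apply,
    ← Matrix.gram_apply, ← coordGram, coordGram_comm b j i] at hjR
  linarith

lemma coordGram_pos_of_inner_neg (b : AffineBasis ι ℝ V) {i j k : ι} (hij : i ≠ j)
    (hki : k ≠ i) (hkj : k ≠ j) {R S : V}
    (hR : R ∈ (affineSpan ℝ (b '' {i, j}ᶜ)).directionᗮ)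
    (hRi : b i - b k - R ∈ (affineSpan ℝ (b '' {i, j}ᶜ)).direction)
    (hSj : b j - b k - S ∈ (affineSpan ℝ (b '' {i, j}ᶜ)).direction) (hRS : ⟪R, S⟫ < 0) :
    0 < coordGram b i j := by
  have : Nontrivial ι := ⟨i, j, hij⟩
  have h := inner_mul_coordGram_self_eq_neg b hij hki hkj hR hRi hSj
  have hneg := mul_neg_of_neg_of_pos hRS (coordGram_self_pos b j)
  exact pos_of_mul_pos_right (by linarith) real_inner_self_nonneg

end Gradient

section MonotoneMatrix

open scoped Matrix

variable {ι k V P : Type*} [Fintype ι] [Field k] [LinearOrder k] [IsStrictOrderedRing k]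

lemma isUnit_of_nonneg_of_mulVec_nonneg [DecidableEq ι] {M : Matrix ι ι k}
    (hM : ∀ x, 0 ≤ M *ᵥ x → 0 ≤ x) : IsUnit M := by
  refine Matrix.mulVec_injective_iff_isUnit.1 fun x y hxy ↦ le_antisymm ?_ ?_ <;>
  · refine sub_nonneg.1 (hM _ ?_)
    simp only [Matrix.mulVec_sub, hxy, sub_self, le_refl]

lemma sum_inv_apply_pos_of_nonneg_of_mulVec_nonneg [DecidableEq ι] {M : Matrix ι ι k}
    (hM : ∀ x, 0 ≤ M *ᵥ x → 0 ≤ x) (j : ι) : 0 < ∑ i, M⁻¹ i j := by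
  have hdet := (Matrix.isUnit_iff_isUnit_det M).1 (isUnit_of_nonneg_of_mulVec_nonneg hM)
  have hcol : M *ᵥ M⁻¹.col j = Pi.single j 1 := by
    rw [← Matrix.mulVec_single_one, Matrix.mulVec_mulVec, Matrix.mul_nonsing_inv M hdet,
      Matrix.one_mulVec]
  have hnonneg : 0 ≤ M⁻¹.col j := hM _ (by rw [hcol]; simp)
  refine Fintype.sum_pos (hnonneg.lt_of_ne' fun hzero ↦ ?_)
  rw [hzero, Matrix.mulVec_zero] at hcol
  simpa using congrFun hcol j

lemma exists_affineBasis_coord_pos_iff [AddCommGroup V] [Module k V] [AddTorsor V P]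
    (b : AffineBasis ι k P) {M : Matrix ι ι k} (hM : ∀ x, 0 ≤ M *ᵥ x → 0 ≤ x) :
    ∃ b' : AffineBasis ι k P, ∀ p i, 0 < b'.coord i p ↔ 0 < (M *ᵥ b.coords p) i := by
  classical
  have hunit := isUnit_of_nonneg_of_mulVec_nonneg hM
  have hdet := (Matrix.isUnit_iff_isUnit_det M).1 hunit
  have hs := sum_inv_apply_pos_of_nonneg_of_mulVec_nonneg hM
  set s : ι → k := fun j ↦ ∑ i, M⁻¹ i j
  have hunit' : IsUnit (Matrix.diagonal s⁻¹ * M⁻¹ᵀ) := by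
    refine (Matrix.isUnit_diagonal.2 (Pi.isUnit_iff.2 fun i ↦ ?_)).mul ?_
    · exact (inv_ne_zero (hs i).ne').isUnit
    · exact (Matrix.isUnit_transpose _).2 (Matrix.isUnit_nonsing_inv_iff.2 hunit)
  have hsum (j : ι) : ∑ i, (Matrix.diagonal s⁻¹ * M⁻¹ᵀ) j i = 1 := by
    simp only [Matrix.diagonal_mul, Matrix.transpose_apply, Pi.inv_apply, ← Finset.mul_sum]
    exact inv_mul_cancel₀ (hs j).ne'
  obtain ⟨b', hb'⟩ := exists_affineBasis_toMatrix_eq b hunit' hsum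
  have hcoords (p : P) : M *ᵥ b.coords p = b'.coords p * s⁻¹ := by
    rw [← b.toMatrix_vecMul_coords b', hb', ← Matrix.vecMul_vecMul, Matrix.vecMul_transpose,
      Matrix.mulVec_mulVec, Matrix.mul_nonsing_inv M hdet, Matrix.one_mulVec]
    ext j
    exact Matrix.vecMul_diagonal _ _ _
  refine ⟨b', fun p i ↦ ?_⟩
  rw [hcoords, Pi.mul_apply, Pi.inv_apply, mul_pos_iff_of_pos_right (inv_pos.2 (hs i)),
    b'.coords_apply]

end MonotoneMatrix

section WellFoundedRecursion

open scoped Matrix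

variable {ι α k : Type*} [LT α] [WellFoundedLT α] [Field k] [LinearOrder k]
  [IsStrictOrderedRing k]
  {next : ι → ι} {depth : ι → α} {r x : ι → k}

lemma nonneg_of_mul_next_le (hr : ∀ i, 0 ≤ r i) (hdepth : ∀ i, r i = 0 ∨ depth (next i) < depth i)
    (hx : ∀ i, r i * x (next i) ≤ x i) (i : ι) : 0 ≤ x i := by
  induction i using (InvImage.wf depth wellFounded_lt).induction with
  | _ i ih =>
    refine le_trans ?_ (hx i)
    obtain hri | hlt := hdepth i
    · rw [hri, zero_mul]
    · exact mul_nonneg (hr i) (ih _ hlt)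

lemma pos_of_mul_next_lt (hr : ∀ i, 0 ≤ r i) (hdepth : ∀ i, r i = 0 ∨ depth (next i) < depth i)
    (hx : ∀ i, r i * x (next i) < x i) (i : ι) : 0 < x i :=
  (mul_nonneg (hr i) (nonneg_of_mul_next_le hr hdepth (fun j ↦ (hx j).le) _)).trans_lt (hx i)

lemma exists_affineBasis_coord_pos_iff_mul_next_lt {V P : Type*} [Finite ι] [AddCommGroup V]
    [Module k V] [AddTorsor V P] (b : AffineBasis ι k P) (hr : ∀ i, 0 ≤ r i)
    (hdepth : ∀ i, r i = 0 ∨ depth (next i) < depth i) :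
    ∃ b' : AffineBasis ι k P, ∀ p i,
      0 < b'.coord i p ↔ r i * b.coord (next i) p < b.coord i p := by
  classical
  cases nonempty_fintype ι
  let M : Matrix ι ι k := 1 - Matrix.of fun i ↦ Pi.single (next i) (r i)
  have hM (x : ι → k) (i : ι) : (M *ᵥ x) i = x i - r i * x (next i) := by
    rw [Matrix.sub_mulVec, Matrix.one_mulVec, Pi.sub_apply]
    exact congrArg _ (single_dotProduct _ _ _)
  obtain ⟨b', hb'⟩ := exists_affineBasis_coord_pos_iff b (M := M) fun x hx ↦
    nonneg_of_mul_next_le hr hdepth fun i ↦ sub_nonneg.1 (hM x i ▸ hx i)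
  refine ⟨b', fun p i ↦ ?_⟩
  rw [hb', hM, sub_pos, b.coords_apply, b.coords_apply]

end WellFoundedRecursion

section LoadingZone

variable {ι V : Type*} [NormedAddCommGroup V] [InnerProductSpace ℝ V]

/-- Resting on the facet opposite `b i` with load `p`, the simplex is stable: the projection `q` of
`p` lies in the relative interior of that facet. -/
def StableOnFacet (b : AffineBasis ι ℝ V) (i : ι) (p : V) : Prop :=
  ∃ q ∈ intrinsicInterior ℝ (convexHull ℝ (b '' {i}ᶜ)),
    ∀ w ∈ (affineSpan ℝ (b '' {i}ᶜ)).direction, ⟪p - q, w⟫ = 0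

/-- Resting on the facet opposite `b i` with load `p`, the simplex tips onto the facet opposite
`b j`: the projection `q` of `p` is separated from `b j` by the ridge common to both facets. -/
def TipsOnto (b : AffineBasis ι ℝ V) (i j : ι) (p : V) : Prop :=
  ∃ q ∈ affineSpan ℝ (b '' {i}ᶜ),
    (∀ w ∈ (affineSpan ℝ (b '' {i}ᶜ)).direction, ⟪p - q, w⟫ = 0) ∧
    (affineSpan ℝ (b '' {i, j}ᶜ)).SOppSide q (b j)

/-- The interior load points for which the facet opposite `b k` is the only stable one and every
other facet `i` tips onto the facet `next i`. -/
def loadingZone (b : AffineBasis ι ℝ V) (next : ι → ι) (k : ι) : Set V :=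
  {p | p ∈ interior (convexHull ℝ (Set.range b)) ∧ StableOnFacet b k p ∧
    ∀ i ≠ k, ¬ StableOnFacet b i p ∧ TipsOnto b i (next i) p}

variable [FiniteDimensional ℝ V] [Nontrivial ι]

lemma coord_facetProj_pos_iff (b : AffineBasis ι ℝ V) (i j : ι) (p : V) :
    0 < b.coord j (facetProj b i p) ↔
      coordGram b i j * b.coord i p < coordGram b i i * b.coord j p := by
  rw [coord_facetProj, sub_pos, div_mul_eq_mul_div, div_lt_iff₀ (coordGram_self_pos b i),
    mul_comm (b.coord i p), mul_comm (b.coord j p)]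

lemma coord_facetProj_neg_iff (b : AffineBasis ι ℝ V) (i j : ι) (p : V) :
    b.coord j (facetProj b i p) < 0 ↔
      coordGram b i i * b.coord j p < coordGram b i j * b.coord i p := by
  rw [coord_facetProj, sub_neg, div_mul_eq_mul_div, lt_div_iff₀ (coordGram_self_pos b i),
    mul_comm (b.coord i p), mul_comm (b.coord j p)]

variable [Finite ι]

lemma stableOnFacet_iff (b : AffineBasis ι ℝ V) (i : ι) (p : V) :
    StableOnFacet b i p ↔
      ∀ j ≠ i, coordGram b i j * b.coord i p < coordGram b i i * b.coord j p := by
  simp only [← coord_facetProj_pos_iff]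
  have hmem := facetProj_mem_affineSpan b i p
  constructor
  · rintro ⟨q, hq, horth⟩ j hj
    have hqspan := convexHull_subset_affineSpan _ (intrinsicInterior_subset hq)
    obtain rfl := (forall_inner_direction_eq_zero_iff_eq_facetProj b i p hqspan).1 horth
    exact ((mem_intrinsicInterior_convexHull_image_iff_coord b).1 hq).1 j hj
  · exact fun hpos ↦ ⟨facetProj b i p, (mem_intrinsicInterior_convexHull_image_iff_coord b).2
      ⟨hpos, (mem_affineSpan_image_iff_coord_eq_zero b).1 hmem⟩,
      (forall_inner_direction_eq_zero_iff_eq_facetProj b i p hmem).2 rfl⟩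

lemma tipsOnto_iff (b : AffineBasis ι ℝ V) {i j : ι} (hij : i ≠ j) (p : V) :
    TipsOnto b i j p ↔ coordGram b i i * b.coord j p < coordGram b i j * b.coord i p := by
  have hins : insert j ({i, j}ᶜ : Set ι) = {i}ᶜ := by
    ext m
    by_cases hm : m = j <;> simp [hm, hij.symm]
  have hopp {q : V} (hq : q ∈ affineSpan ℝ (b '' {i}ᶜ)) :
      (affineSpan ℝ (b '' {i, j}ᶜ)).SOppSide q (b j) ↔ b.coord j q < 0 :=
    sOppSide_affineSpan_image_iff_coord_neg b (by simp) (hins ▸ hq)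
  have hmem := facetProj_mem_affineSpan b i p
  rw [← coord_facetProj_neg_iff, ← hopp hmem]
  constructor
  · rintro ⟨q, hq, horth, hside⟩
    rwa [(forall_inner_direction_eq_zero_iff_eq_facetProj b i p hq).1 horth] at hside
  · exact fun hside ↦
      ⟨_, hmem, (forall_inner_direction_eq_zero_iff_eq_facetProj b i p hmem).2 rfl, hside⟩

lemma not_stableOnFacet_of_tipsOnto {b : AffineBasis ι ℝ V} {i j : ι} (hij : i ≠ j) {p : V}
    (h : TipsOnto b i j p) : ¬ StableOnFacet b i p := fun hstable ↦
  lt_asymm ((tipsOnto_iff b hij p).1 h) ((stableOnFacet_iff b i p).1 hstable j hij.symm)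

lemma coordGram_mul_coord_lt_of_tipsOnto {b : AffineBasis ι ℝ V} {i j : ι} (hij : i ≠ j) {p : V}
    (hp : 0 < b.coord i p) (hG : 0 < coordGram b i j) (h : TipsOnto b i j p) :
    coordGram b j i * b.coord j p < coordGram b j j * b.coord i p := by
  rw [tipsOnto_iff b hij] at h
  rw [coordGram_comm b j i]
  refine lt_of_mul_lt_mul_left ?_ (coordGram_self_pos b i).le
  calc coordGram b i i * (coordGram b i j * b.coord j p)
      = coordGram b i j * (coordGram b i i * b.coord j p) := mul_left_comm _ _ _
    _ < coordGram b i j * (coordGram b i j * b.coord i p) := mul_lt_mul_of_pos_left h hG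
    _ = coordGram b i j * coordGram b i j * b.coord i p := (mul_assoc _ _ _).symm
    _ ≤ coordGram b i i * coordGram b j j * b.coord i p :=
      mul_le_mul_of_nonneg_right (coordGram_mul_self_le b i j) hp.le
    _ = coordGram b i i * (coordGram b j j * b.coord i p) := mul_assoc _ _ _

lemma stableOnFacet_of_forall_tipsOnto {b : AffineBasis ι ℝ V} {next : ι → ι} {k : ι} {p : V}
    (hp : ∀ i, 0 < b.coord i p) (hG : ∀ i ≠ k, 0 < coordGram b i (next i))
    (hsink : ∀ i ≠ k, 0 < coordGram b k i → next i = k)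
    (htips : ∀ i ≠ k, TipsOnto b i (next i) p) : StableOnFacet b k p := by
  refine (stableOnFacet_iff b k p).2 fun i hi ↦ ?_
  by_cases hnext : next i = k
  · exact coordGram_mul_coord_lt_of_tipsOnto hi (hp i) (hnext ▸ hG i hi) (hnext ▸ htips i hi)
  · exact (mul_nonpos_of_nonpos_of_nonneg (not_lt.1 (mt (hsink i hi) hnext)) (hp k).le).trans_lt
      (mul_pos (coordGram_self_pos b k) (hp i))

theorem exists_loadingZone_eq_interior_convexHull (b : AffineBasis ι ℝ V) {next : ι → ι} {k : ι}
    {α : Type*} [Preorder α] [WellFoundedLT α] {depth : ι → α}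
    (hdepth : ∀ i ≠ k, depth (next i) < depth i) (hG : ∀ i ≠ k, 0 < coordGram b i (next i))
    (hsink : ∀ i ≠ k, 0 < coordGram b k i → next i = k) :
    ∃ b' : AffineBasis ι ℝ V,
      loadingZone b next k = interior (convexHull ℝ (Set.range b')) := by
  classical
  have hne (i : ι) (hi : i ≠ k) : i ≠ next i := fun h ↦ (hdepth i hi).ne' (congrArg depth h)
  let r (i : ι) : ℝ := if i = k then 0 else coordGram b i i / coordGram b i (next i)
  have hrk : r k = 0 := if_pos rfl
  have hr (i : ι) : 0 ≤ r i := by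
    obtain rfl | hi := eq_or_ne i k
    · exact hrk.ge
    · simpa only [r, if_neg hi] using (div_pos (coordGram_self_pos b i) (hG i hi)).le
  have hrdepth (i : ι) : r i = 0 ∨ depth (next i) < depth i :=
    (eq_or_ne i k).imp (fun h ↦ by rw [h, hrk]) (hdepth i)
  have htips (i : ι) (hi : i ≠ k) (p : V) :
      TipsOnto b i (next i) p ↔ r i * b.coord (next i) p < b.coord i p := by
    simp only [r, if_neg hi, tipsOnto_iff b (hne i hi), div_mul_eq_mul_div,
      div_lt_iff₀ (hG i hi), mul_comm (b.coord i p)]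
  obtain ⟨b', hb'⟩ := exists_affineBasis_coord_pos_iff_mul_next_lt b hr hrdepth
  refine ⟨b', Set.ext fun p ↦ ?_⟩
  simp only [loadingZone, AffineBasis.interior_convexHull, Set.mem_ofPred_eq, hb']
  constructor
  · rintro ⟨hp, -, hother⟩ i
    obtain rfl | hi := eq_or_ne i k
    · simpa only [hrk, zero_mul] using hp i
    · exact (htips i hi p).1 (hother i hi).2
  · intro hcone
    have hp := pos_of_mul_next_lt (x := fun i ↦ b.coord i p) hr hrdepth hcone
    have htip (i : ι) (hi : i ≠ k) := (htips i hi p).2 (hcone i)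
    exact ⟨hp, stableOnFacet_of_forall_tipsOnto hp hG hsink htip,
      fun i hi ↦ ⟨not_stableOnFacet_of_tipsOnto (hne i hi) (htip i hi), htip i hi⟩⟩

end LoadingZone

section Chain

/-- The neighbour of `i` in the chain `0 – 1 – 2 – 3` in the direction of `k`. -/
def chainStep (k i : Fin 4) : Fin 4 :=
  if i < k then i + 1 else i - 1

variable {V : Type*} [NormedAddCommGroup V] [InnerProductSpace ℝ V] [FiniteDimensional ℝ V]

lemma coordGram_neg_of_chain (b : AffineBasis (Fin 4) ℝ V) (h01 : 0 < coordGram b 0 1)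
    (h12 : 0 < coordGram b 1 2) (h23 : 0 < coordGram b 2 3) :
    coordGram b 0 2 < 0 ∧ coordGram b 1 3 < 0 ∧ coordGram b 0 3 < 0 := by
  have hrow (i : Fin 4) :
      coordGram b i 0 + coordGram b i 1 + coordGram b i 2 + coordGram b i 3 = 0 := by
    rw [← Fin.sum_univ_four, sum_coordGram]
  have hsq : 0 ≤ coordGram b 0 0 + 2 * coordGram b 0 2 + coordGram b 2 2 := by
    refine (real_inner_self_nonneg (x := coordGrad b 0 + coordGrad b 2)).trans_eq ?_
    exact real_inner_add_add_self _ _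
  have := coordGram_self_pos b 1
  have := coordGram_self_pos b 2
  have := coordGram_comm b 0 1
  have := coordGram_comm b 0 2
  have := coordGram_comm b 1 2
  refine ⟨?_, ?_, ?_⟩ <;> linarith [hrow 0, hrow 1, hrow 2]

lemma chainStep_eq_of_coordGram_pos (b : AffineBasis (Fin 4) ℝ V) (h01 : 0 < coordGram b 0 1)
    (h12 : 0 < coordGram b 1 2) (h23 : 0 < coordGram b 2 3) {k i : Fin 4} (hi : i ≠ k)
    (hki : 0 < coordGram b k i) : chainStep k i = k := by
  obtain ⟨h02, h13, h03⟩ := coordGram_neg_of_chain b h01 h12 h23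
  have h20 := coordGram_comm b 0 2 ▸ h02
  have h31 := coordGram_comm b 1 3 ▸ h13
  have h30 := coordGram_comm b 0 3 ▸ h03
  fin_cases k <;> fin_cases i <;>
    first | rfl | exact absurd rfl hi | exact absurd hki (lt_asymm ‹_›)

lemma coordGram_chainStep_pos (b : AffineBasis (Fin 4) ℝ V) (h01 : 0 < coordGram b 0 1)
    (h12 : 0 < coordGram b 1 2) (h23 : 0 < coordGram b 2 3) {k i : Fin 4} (hi : i ≠ k) :
    0 < coordGram b i (chainStep k i) := by
  have h10 := coordGram_comm b 0 1 ▸ h01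
  have h21 := coordGram_comm b 1 2 ▸ h12
  have h32 := coordGram_comm b 2 3 ▸ h23
  fin_cases k <;> fin_cases i <;> first | assumption | exact absurd rfl hi

lemma exists_loadingZone_chainStep_eq_interior_convexHull (b : AffineBasis (Fin 4) ℝ V)
    (h01 : 0 < coordGram b 0 1) (h12 : 0 < coordGram b 1 2) (h23 : 0 < coordGram b 2 3)
    (k : Fin 4) :
    ∃ b' : AffineBasis (Fin 4) ℝ V,
      loadingZone b (chainStep k) k = interior (convexHull ℝ (Set.range b')) := by
  refine exists_loadingZone_eq_interior_convexHull b (depth := fun i ↦ Nat.dist i k) ?_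
    (fun i hi ↦ coordGram_chainStep_pos b h01 h12 h23 hi)
    (fun i hi ↦ chainStep_eq_of_coordGram_pos b h01 h12 h23 hi)
  revert k
  decide

end Chain

section Tetrahedron

lemma range_fin_four {α : Type*} (f : Fin 4 → α) : Set.range f = {f 0, f 1, f 2, f 3} := by
  ext x
  simp [Fin.exists_fin_succ, eq_comm]

-- In the order `c, d, a, b` the faces opposite `e 0, e 1, e 2, e 3` form the chain `C, D, A, B`.
lemma exists_affineBasis_chain {a b c d : E3} (h : AffineIndependent ℝ ![a, b, c, d]) :
    ∃ e : AffineBasis (Fin 4) ℝ E3,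
      Set.range e = {a, b, c, d} ∧ e 0 = c ∧ e 1 = d ∧ e 2 = a ∧ e 3 = b := by
  let σ : Fin 4 ≃ Fin 4 := Equiv.addRight 2
  have hind : AffineIndependent ℝ (![a, b, c, d] ∘ σ) := h.comp_embedding σ.toEmbedding
  refine ⟨⟨_, hind, hind.affineSpan_eq_top_iff_card_eq_finrank_add_one.2 (by simp)⟩,
    ?_, rfl, rfl, rfl, rfl⟩
  exact (σ.surjective.range_comp ![a, b, c, d]).trans (range_fin_four _)

lemma forall_ne_and_fin_four_iff {P Q : Fin 4 → Prop} {k : Fin 4} :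
    (∀ i ≠ k, P i ∧ Q i) ↔
      P (k.succAbove 0) ∧ P (k.succAbove 1) ∧ P (k.succAbove 2) ∧
        Q (k.succAbove 0) ∧ Q (k.succAbove 1) ∧ Q (k.succAbove 2) := by
  rw [Fin.forall_iff_succAbove k]
  simp only [ne_eq, not_true_eq_false, Fin.succAbove_ne, not_false_eq_true,
    forall_const, true_and, Fin.forall_fin_succ, IsEmpty.forall_iff, and_true]
  tauto

variable {e : AffineBasis (Fin 4) ℝ E3} {i j k l : Fin 4} {p : E3}

lemma stableOn_iff_stableOnFacet (h : ∀ m, m ≠ i ↔ m = j ∨ m = k ∨ m = l) :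
    StableOn p (e j) (e k) (e l) ↔ StableOnFacet e i p := by
  have hfacet : ({i}ᶜ : Set (Fin 4)) = {j, k, l} := Set.ext h
  rw [StableOn, StableOnFacet, hfacet, Set.image_insert_eq, Set.image_pair]

lemma tipsOver_iff_tipsOnto (h : ∀ m, m ≠ i ↔ m = j ∨ m = k ∨ m = l)
    (h' : ∀ m, ¬ (m = i ∨ m = j) ↔ m = k ∨ m = l) :
    TipsOver p (e j) (e k) (e l) ↔ TipsOnto e i j p := by
  have hfacet : ({i}ᶜ : Set (Fin 4)) = {j, k, l} := Set.ext h
  have hridge : ({i, j}ᶜ : Set (Fin 4)) = {k, l} := Set.ext h'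
  rw [TipsOver, TipsOnto, hfacet, hridge, Set.image_insert_eq, Set.image_pair]

lemma fallingPattern_iff :
    FallingPattern (e 2) (e 3) (e 0) (e 1) p k ↔ StableOnFacet e k p ∧
      ∀ i ≠ k, ¬ StableOnFacet e i p ∧ TipsOnto e i (chainStep k i) p := by
  have hC : StableOn p (e 2) (e 3) (e 1) ↔ StableOnFacet e 0 p :=
    stableOn_iff_stableOnFacet (by decide)
  have hD : StableOn p (e 2) (e 3) (e 0) ↔ StableOnFacet e 1 p :=
    stableOn_iff_stableOnFacet (by decide)
  have hA : StableOn p (e 3) (e 0) (e 1) ↔ StableOnFacet e 2 p :=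
    stableOn_iff_stableOnFacet (by decide)
  have hB : StableOn p (e 2) (e 0) (e 1) ↔ StableOnFacet e 3 p :=
    stableOn_iff_stableOnFacet (by decide)
  have hCD : TipsOver p (e 1) (e 2) (e 3) ↔ TipsOnto e 0 1 p :=
    tipsOver_iff_tipsOnto (by decide) (by decide)
  have hDC : TipsOver p (e 0) (e 2) (e 3) ↔ TipsOnto e 1 0 p :=
    tipsOver_iff_tipsOnto (by decide) (by decide)
  have hDA : TipsOver p (e 2) (e 3) (e 0) ↔ TipsOnto e 1 2 p :=
    tipsOver_iff_tipsOnto (by decide) (by decide)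
  have hAD : TipsOver p (e 1) (e 3) (e 0) ↔ TipsOnto e 2 1 p :=
    tipsOver_iff_tipsOnto (by decide) (by decide)
  have hAB : TipsOver p (e 3) (e 0) (e 1) ↔ TipsOnto e 2 3 p :=
    tipsOver_iff_tipsOnto (by decide) (by decide)
  have hBA : TipsOver p (e 2) (e 0) (e 1) ↔ TipsOnto e 3 2 p :=
    tipsOver_iff_tipsOnto (by decide) (by decide)
  rw [forall_ne_and_fin_four_iff]
  fin_cases k <;>
    simp only [FallingPattern, hC, hD, hA, hB, hCD, hDC, hDA, hAD, hAB, hBA] <;> rfl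

lemma ObtuseEdge.coordGram_pos (hij : i ≠ j) (h : ∀ m, ¬ (m = i ∨ m = j) ↔ m = k ∨ m = l)
    (hobt : ObtuseEdge (e k) (e l) (e i) (e j)) : 0 < coordGram e i j := by
  have hridge : ({i, j}ᶜ : Set (Fin 4)) = {k, l} := Set.ext h
  obtain ⟨hki, hkj⟩ := not_or.1 ((h k).2 (Or.inl rfl))
  have hdir (v : E3) : v ∈ (affineSpan ℝ (e '' {i, j}ᶜ)).direction ↔
      ∃ t : ℝ, t • (e l - e k) = v := by
    rw [hridge, Set.image_pair, direction_affineSpan, mem_vectorSpan_pair_rev]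
    rfl
  have horth (v : E3) :
      ⟪v - (⟪v, e l - e k⟫ / ⟪e l - e k, e l - e k⟫) • (e l - e k), e l - e k⟫ = 0 := by
    rw [inner_sub_left, real_inner_smul_left, sub_eq_zero, eq_comm]
    exact div_mul_cancel_of_imp fun h0 ↦ by rw [inner_self_eq_zero.1 h0, inner_zero_right]
  refine coordGram_pos_of_inner_neg e hij hki hkj ?_ ?_ ?_ hobt
  · rw [Submodule.mem_orthogonal']
    intro w hw
    obtain ⟨t, rfl⟩ := (hdir w).1 hw
    rw [inner_smul_right, horth, mul_zero]
  · exact (hdir _).2 ⟨_, (sub_sub_cancel _ _).symm⟩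
  · exact (hdir _).2 ⟨_, (sub_sub_cancel _ _).symm⟩

end Tetrahedron

/-- **Loading zones are open tetrahedra**: fix a tetrahedron `abcd` whose edges
`ab`, `bc`, `cd` are all obtuse, and one of the four falling patterns `k` along
the face chain `C–D–A–B`.  Then the loading zone of that pattern — the set of
interior load points `p` for which the tetrahedron is stable exactly on the sink
face and every other face tips over the appropriate shared edge toward the sink —
is the interior of the convex hull of four affinely independent points. -/
theorem loading_zone_is_open_tetrahedron (a b c d : E3)
    (h : AffineIndependent ℝ ![a, b, c, d])
    (hab : ObtuseEdge a b c d) (hbc : ObtuseEdge b c a d) (hcd : ObtuseEdge c d a b)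
    (k : Fin 4) :
    ∃ w x y z : E3, AffineIndependent ℝ ![w, x, y, z] ∧
      {p : E3 | p ∈ interior (convexHull ℝ ({a, b, c, d} : Set E3)) ∧
          FallingPattern a b c d p k}
        = interior (convexHull ℝ ({w, x, y, z} : Set E3)) := by
  obtain ⟨e, hrange, rfl, rfl, rfl, rfl⟩ := exists_affineBasis_chain h
  have h01 : 0 < coordGram e 0 1 := hab.coordGram_pos (by decide) (by decide)
  have h21 : 0 < coordGram e 2 1 := hbc.coordGram_pos (by decide) (by decide)
  have h23 : 0 < coordGram e 2 3 := hcd.coordGram_pos (by decide) (by decide)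
  obtain ⟨b', hb'⟩ := exists_loadingZone_chainStep_eq_interior_convexHull e h01
    (coordGram_comm e 2 1 ▸ h21) h23 k
  refine ⟨b' 0, b' 1, b' 2, b' 3, ?_, ?_⟩
  · exact (FinVec.etaExpand_eq b').symm ▸ b'.ind
  · rw [← range_fin_four, ← hb', ← hrange]
    exact Set.ext fun p ↦ and_congr_right fun _ ↦ fallingPattern_iff
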